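/- For every m with 1 ≤ m ≤ n and every l with 1 ≤ l ≤ n−k, define for nonnegative integers r, s with r+s = m the polynomial B^{(rs)}_l = Σ_{d=0}^{l−1}(l+s−2d−1)·q_d·q_{l+s−d−1}·p_r + (r+l−1)·(Σ_{d=0}^{l−1} p_{r+l−d−1}·q_d)·q_s. Then Σ_{r+s=m, r,s≥0} B^{(rs)}_l lies in the ideal I. -/

import Mathlib

open MvPolynomial Finset

/-- The polynomial ring `P = ℂ[p_1,…,p_k,q_1,…,q_{n-k}]`:
the variable `Sum.inl j` is `p_{j+1}` and `Sum.inr l` is `q_{l+1}`. -/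
abbrev PR (n k : ℕ) := MvPolynomial (Fin k ⊕ Fin (n - k)) ℂ

/-- `pZ n k a` is the Chern class generator `p_a`, with the conventions `p_0 = 1`
and `p_a = 0` for `a < 0` or `a > k`. -/
noncomputable def pZ (n k : ℕ) (a : ℤ) : PR n k :=
  if a = 0 then 1
  else if h : 1 ≤ a ∧ a ≤ (k : ℤ) then
    MvPolynomial.X (Sum.inl ⟨(a - 1).toNat, by omega⟩)
  else 0

/-- `qZ n k a` is the Chern class generator `q_a`, with the conventions `q_0 = 1`
and `q_a = 0` for `a < 0` or `a > n-k`. -/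
noncomputable def qZ (n k : ℕ) (a : ℤ) : PR n k :=
  if a = 0 then 1
  else if h : 1 ≤ a ∧ a ≤ ((n - k : ℕ) : ℤ) then
    MvPolynomial.X (Sum.inr ⟨(a - 1).toNat, by omega⟩)
  else 0

/-- `R_m = Σ_{r+s=m, r,s ≥ 0} p_r q_s`. -/
noncomputable def Rm (n k : ℕ) (m : ℕ) : PR n k :=
  ∑ x ∈ Finset.HasAntidiagonal.antidiagonal m, pZ n k x.1 * qZ n k x.2

/-- The ideal `I ⊆ P` generated by `R_1, …, R_n`. -/
noncomputable def Igr (n k : ℕ) : Ideal (PR n k) :=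
  Ideal.span ((fun m => Rm n k m) '' (Finset.Icc 1 n : Finset ℕ))

/-- Multiplication by `g` as a linear endomorphism of `P`. -/
noncomputable def Mop (n k : ℕ) (g : PR n k) : Module.End ℂ (PR n k) :=
  LinearMap.mulLeft ℂ g

/-- The partial derivative with respect to the variable `i`, as a linear endomorphism. -/
noncomputable def Pd (n k : ℕ) (i : Fin k ⊕ Fin (n - k)) : Module.End ℂ (PR n k) :=
  (MvPolynomial.pderiv i).toLinearMap

/-- `B^{(rs)}_l = Σ_{d=0}^{l-1}(l+s-2d-1)·q_d·q_{l+s-d-1}·p_r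
               + (r+l-1)·(Σ_{d=0}^{l-1} p_{r+l-d-1}·q_d)·q_s`. -/
noncomputable def Bpoly (n k : ℕ) (l r s : ℕ) : PR n k :=
  (∑ d ∈ Finset.range l, (((l : ℂ) + (s : ℕ) - 2 * (d : ℕ) - 1)) •
      (qZ n k (d : ℕ) * qZ n k ((l : ℤ) + (s : ℕ) - (d : ℕ) - 1) * pZ n k (r : ℕ)))
  + ((r : ℂ) + (l : ℕ) - 1) •
      ((∑ d ∈ Finset.range l, pZ n k ((r : ℤ) + (l : ℕ) - (d : ℕ) - 1) * qZ n k (d : ℕ))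
        * qZ n k (s : ℕ))

/-- Triangular antisymmetric sum vanishes. -/
lemma tri_antisymm {A : Type*} [CommRing A] (p q : ℕ → A) (m L : ℕ) :
    ∑ d ∈ range (L + 1), q d * ∑ t ∈ range (L - d),
      ((t : A) - d) * (q t * p (L - d + m - t)) = 0 := by
  have h1 : ∑ d ∈ range (L + 1), ∑ t ∈ range (L - d),
      (t : A) * (q d * q t * p (L - d + m - t)) =
      ∑ d ∈ range (L + 1), ∑ t ∈ range (L - d),
      (d : A) * (q d * q t * p (L - d + m - t)) := by
    rw [Finset.sum_comm' (s' := fun t => range (L - t)) (t' := range (L + 1))]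
    · refine Finset.sum_congr rfl fun d hd => Finset.sum_congr rfl fun t ht => ?_
      simp only [Finset.mem_range] at hd ht
      rw [show L - t + m - d = L - d + m - t by omega]
      ring
    · intro x y
      simp only [Finset.mem_range]
      omega
  rw [← sub_eq_zero, ← Finset.sum_sub_distrib] at h1
  rw [← h1]
  refine Finset.sum_congr rfl fun d _ => ?_
  rw [← Finset.sum_sub_distrib, Finset.mul_sum]
  refine Finset.sum_congr rfl fun t _ => ?_
  ring

/-- The second triangular sum vanishes thanks to the relations. -/
lemma tri_rel {A : Type*} [CommRing A] (p q : ℕ → A) (m L : ℕ)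
    (hR : ∀ j, 1 ≤ j → ∑ t ∈ range (j + 1), q t * p (j - t) = 0) :
    ∑ d ∈ range (L + 1), q d * ∑ x ∈ range (L - d),
      ((L : A) - 1 - x) * (q (m + 1 + x) * p (L - d - 1 - x)) = 0 := by
  simp only [Finset.mul_sum]
  rw [Finset.sum_comm' (s' := fun x => range (L - x)) (t' := range L)]
  · refine Finset.sum_eq_zero fun x hx => ?_
    simp only [Finset.mem_range] at hx
    obtain ⟨j, rfl⟩ : ∃ j, L = x + 1 + j := ⟨L - (x + 1), by omega⟩
    have h : ∑ d ∈ range (x + 1 + j - x), q d * (((x + 1 + j : ℕ) : A) - 1 - x) *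
        (q (m + 1 + x) * p (x + 1 + j - d - 1 - x)) =
        (j : A) * q (m + 1 + x) * ∑ d ∈ range (j + 1), q d * p (j - d) := by
      rw [show x + 1 + j - x = j + 1 by omega, Finset.mul_sum]
      refine Finset.sum_congr rfl fun d _ => ?_
      rw [show x + 1 + j - d - 1 - x = j - d by omega]
      push_cast
      ring
    simp only [← mul_assoc] at h ⊢
    rw [h]
    rcases Nat.eq_zero_or_pos j with rfl | hj
    · simp
    · rw [hR j hj, mul_zero]
  · intro x y
    simp only [Finset.mem_range]
    omega

/-- The abstract identity. -/
lemma abstract_identity {A : Type*} [CommRing A] (p q : ℕ → A) (m L : ℕ) (hm : 1 ≤ m)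
    (hR : ∀ j, 1 ≤ j → ∑ t ∈ range (j + 1), q t * p (j - t) = 0) :
    ∑ s ∈ range (m + 1), ∑ d ∈ range (L + 1),
      (((L : A) + s - 2 * d) * (q d * q (L - d + s) * p (m - s))
        + ((m : A) + L - s) * (p (L - d + m - s) * q d * q s)) = 0 := by
  rw [Finset.sum_comm]
  have key : ∀ d ∈ range (L + 1), ∑ s ∈ range (m + 1),
      (((L : A) + s - 2 * d) * (q d * q (L - d + s) * p (m - s))
        + ((m : A) + L - s) * (p (L - d + m - s) * q d * q s)) =
      - (q d * ∑ t ∈ range (L - d), ((t : A) - d) * (q t * p (L - d + m - t)))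
      - (q d * ∑ x ∈ range (L - d),
      ((L : A) - 1 - x) * (q (m + 1 + x) * p (L - d - 1 - x))) := by
    intro d hd
    simp only [Finset.mem_range] at hd
    obtain ⟨j, rfl⟩ : ∃ j, L = d + j := ⟨L - d, by omega⟩
    rw [show d + j - d = j by omega]
    have e1 := Finset.sum_range_add (fun t => ((t : A) - d) * (q t * p (j + m - t))) j (m + 1)
    have e2 := Finset.sum_range_add
      (fun s => ((m : A) + (d + j : ℕ) - s) * (q s * p (j + m - s))) (m + 1) j
    have e3 := hR (j + m) (by omega)
    have e4 : ∑ t ∈ range (j + (m + 1)), ((t : A) - d) * (q t * p (j + m - t)) +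
        ∑ s ∈ range (m + 1 + j), ((m : A) + (d + j : ℕ) - s) * (q s * p (j + m - s)) = 0 := by
      rw [show m + 1 + j = j + m + 1 by omega, show j + (m + 1) = j + m + 1 by omega,
        ← Finset.sum_add_distrib]
      rw [← mul_zero ((m : A) + j), ← e3, Finset.mul_sum]
      refine Finset.sum_congr rfl fun t _ => ?_
      push_cast
      ring
    rw [e1, e2] at e4
    have e5 : ∑ x ∈ range (m + 1), (((j + x : ℕ) : A) - d) * (q (j + x) * p (j + m - (j + x)))
        = ∑ x ∈ range (m + 1), (((d + j : ℕ) : A) + x - 2 * d) * (q (j + x) * p (m - x)) := by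
      refine Finset.sum_congr rfl fun t _ => ?_
      rw [show j + m - (j + t) = m - t by omega]
      push_cast
      ring
    have e6 : ∑ x ∈ range j, ((m : A) + (d + j : ℕ) - (m + 1 + x : ℕ)) *
        (q (m + 1 + x) * p (j + m - (m + 1 + x)))
        = ∑ x ∈ range j, (((d + j : ℕ) : A) - 1 - x) * (q (m + 1 + x) * p (j - 1 - x)) := by
      refine Finset.sum_congr rfl fun t _ => ?_
      rw [show j + m - (m + 1 + t) = j - 1 - t by omega]
      push_cast
      ring
    rw [e5, e6] at e4
    have e7 : ∑ s ∈ range (m + 1),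
      ((((d + j : ℕ) : A) + s - 2 * d) * (q d * q (j + s) * p (m - s))
        + ((m : A) + (d + j : ℕ) - s) * (p (j + m - s) * q d * q s)) =
        q d * (∑ x ∈ range (m + 1), (((d + j : ℕ) : A) + x - 2 * d) * (q (j + x) * p (m - x))
         + ∑ s ∈ range (m + 1), ((m : A) + (d + j : ℕ) - s) * (q s * p (j + m - s))) := by
      rw [← Finset.sum_add_distrib, Finset.mul_sum]
      refine Finset.sum_congr rfl fun t _ => ?_
      ring
    rw [e7]
    linear_combination q d * e4
  rw [Finset.sum_congr rfl key, Finset.sum_sub_distrib, Finset.sum_neg_distrib,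
    tri_antisymm, tri_rel p q m L hR]
  simp

lemma Rm_mem (n k : ℕ) (hk : k ≤ n) (j : ℕ) (hj : 1 ≤ j) : Rm n k j ∈ Igr n k := by
  by_cases h : j ≤ n
  · exact Ideal.subset_span ⟨j, by simp; omega, rfl⟩
  · have : Rm n k j = 0 := by
      refine Finset.sum_eq_zero fun x hx => ?_
      rw [Finset.HasAntidiagonal.mem_antidiagonal] at hx
      by_cases h1 : x.1 ≤ k
      · have : qZ n k x.2 = 0 := by
          unfold qZ
          rw [if_neg (by omega), dif_neg (by omega)]
        rw [this, mul_zero]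
      · have : pZ n k x.1 = 0 := by
          unfold pZ
          rw [if_neg (by omega), dif_neg (by omega)]
        rw [this, zero_mul]
    rw [this]
    exact Ideal.zero_mem _

/-- For every `1 ≤ m ≤ n` and `1 ≤ l ≤ n-k`, the sum `Σ_{r+s=m, r,s ≥ 0} B^{(rs)}_l`
lies in the ideal `I`. -/
theorem sum_B_mem_ideal (n k : ℕ) (hk1 : 1 ≤ k) (hk2 : k ≤ n - 1)
    (m : ℕ) (hm1 : 1 ≤ m) (hm2 : m ≤ n) (l : ℕ) (hl1 : 1 ≤ l) (hl2 : l ≤ n - k) :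
    ∑ x ∈ Finset.HasAntidiagonal.antidiagonal m, Bpoly n k l x.1 x.2 ∈ Igr n k := by
  obtain ⟨L, rfl⟩ : ∃ L, l = L + 1 := ⟨l - 1, by omega⟩
  rw [← Ideal.Quotient.eq_zero_iff_mem]
  set f := Ideal.Quotient.mk (Igr n k) with hf
  have hR : ∀ j, 1 ≤ j → ∑ t ∈ range (j + 1),
      f (qZ n k (t : ℕ)) * f (pZ n k ((j - t : ℕ) : ℤ)) = 0 := by
    intro j hj
    have h := Ideal.Quotient.eq_zero_iff_mem.mpr (Rm_mem n k (by omega) j hj)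
    rw [Rm, ← Finset.Nat.sum_antidiagonal_swap,
      Finset.Nat.sum_antidiagonal_eq_sum_range_succ_mk, map_sum] at h
    rw [← h]
    refine Finset.sum_congr rfl fun t _ => ?_
    simp [hf, mul_comm]
  have key := abstract_identity (fun j : ℕ => f (pZ n k (j : ℤ)))
    (fun j : ℕ => f (qZ n k (j : ℤ))) m L hm1 hR
  rw [← Finset.Nat.sum_antidiagonal_swap, Finset.Nat.sum_antidiagonal_eq_sum_range_succ_mk,
    map_sum, ← key]
  refine Finset.sum_congr rfl fun s hs => ?_
  simp only [Finset.mem_range] at hs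
  obtain ⟨r, rfl⟩ : ∃ r, m = s + r := ⟨m - s, by omega⟩
  simp only [Prod.swap, Bpoly, show s + r - s = r by omega]
  rw [Finset.sum_mul, Finset.smul_sum, ← Finset.sum_add_distrib, map_sum]
  refine Finset.sum_congr rfl fun d hd => ?_
  simp only [Finset.mem_range] at hd
  rw [show ((L + 1 : ℕ) : ℤ) + s - d - 1 = ((L - d + s : ℕ) : ℤ) by omega,
    show (r : ℤ) + (L + 1 : ℕ) - d - 1 = ((L - d + (s + r) - s : ℕ) : ℤ) by omega]
  simp only [MvPolynomial.smul_eq_C_mul, map_add, map_mul, map_sub, Nat.cast_add, Nat.cast_one,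
    map_natCast, map_one, map_ofNat]
  ring
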